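/- arXiv:1603.07628 — 2 statements merged into one kernel-verified Lean document; each statement's English description precedes it below -/
import Mathlib

section
/- (Proposition 9, simplified form k_n ≤ n+2.) For every n ≥ 1, every random vector X in ℝⁿ with E[‖X‖²] < ∞, and every snr > 0, (1/n)·Tr(E[(Cov(X|Y_snr))²]) ≤ (n+2)/snr². In particular, for n = 1 this gives E[(Var(X|Y_snr))²] ≤ 3/snr², sharpening the previously known constant 48 to 3. -/
open MeasureTheory ProbabilityTheory Real Matrix

noncomputable section

/-- The observation `Y_snr = √snr · X + Z` as a random vector in `ℝⁿ` (modeled as `Fin n → ℝ`). -/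
def obs {Ω : Type*} {n : ℕ} (X Z : Ω → Fin n → ℝ) (snr : ℝ) : Ω → Fin n → ℝ :=
  fun ω i => Real.sqrt snr * X ω i + Z ω i

/-- The σ-algebra generated by the observation `Y_snr`. -/
def obsSigma {Ω : Type*} [MeasurableSpace Ω] {n : ℕ} (X Z : Ω → Fin n → ℝ) (snr : ℝ) :
    MeasurableSpace Ω :=
  MeasurableSpace.comap (obs X Z snr) inferInstance

/-- Componentwise conditional expectation of a random vector given a sub-σ-algebra `m`. -/
def ceVec {Ω : Type*} {n : ℕ} (m : MeasurableSpace Ω) [MeasurableSpace Ω] (μ : Measure Ω)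
    (V : Ω → Fin n → ℝ) : Ω → Fin n → ℝ :=
  fun ω i => (μ[fun ω' => V ω' i | m]) ω

/-- Entrywise conditional expectation of a random matrix given a sub-σ-algebra `m`. -/
def ceMat {Ω : Type*} {n : ℕ} (m : MeasurableSpace Ω) [MeasurableSpace Ω] (μ : Measure Ω)
    (M : Ω → Matrix (Fin n) (Fin n) ℝ) : Ω → Matrix (Fin n) (Fin n) ℝ :=
  fun ω => Matrix.of fun i j => (μ[fun ω' => M ω' i j | m]) ω

/-- Conditional covariance matrix `Cov(V|m) = E[V Vᵀ|m] − E[V|m]·E[V|m]ᵀ` (entrywise). -/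
def covMat {Ω : Type*} {n : ℕ} (m : MeasurableSpace Ω) [MeasurableSpace Ω] (μ : Measure Ω)
    (V : Ω → Fin n → ℝ) : Ω → Matrix (Fin n) (Fin n) ℝ :=
  fun ω => ceMat m μ (fun ω' => Matrix.vecMulVec (V ω') (V ω')) ω
    - Matrix.vecMulVec (ceVec m μ V ω) (ceVec m μ V ω)

/-- Entrywise expectation of a random matrix. -/
def expMat {Ω : Type*} [MeasurableSpace Ω] {n : ℕ} (μ : Measure Ω)
    (M : Ω → Matrix (Fin n) (Fin n) ℝ) : Matrix (Fin n) (Fin n) ℝ :=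
  Matrix.of fun i j => ∫ ω, M ω i j ∂μ

/-- `Tr(E[M])` for a random matrix `M` (expectation entrywise). -/
def trExp {Ω : Type*} [MeasurableSpace Ω] {n : ℕ} (μ : Measure Ω)
    (M : Ω → Matrix (Fin n) (Fin n) ℝ) : ℝ :=
  Matrix.trace (expMat μ M)

/-!
Given `Y = √snr X + Z`, the vectors `√snr X` and `-Z` differ by the known quantity `Y`, hence
`Cov(Z | Y) = snr Cov(X | Y)`, and it suffices to bound the conditional covariance of the noise.
Since `E[Z Zᵀ | Y] = Cov(Z | Y) + E[Z | Y] E[Z | Y]ᵀ` with both terms positive semidefinite,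
`tr Cov(Z | Y)² ≤ tr E[Z Zᵀ | Y]²`. The latter is a squared Frobenius norm, so Jensen's inequality
bounds it by `E[‖Z Zᵀ‖² | Y] = E[‖Z‖⁴ | Y]`, and `E ‖Z‖⁴ = n (n + 2)` for a standard Gaussian.
-/

section GaussianMoments

lemma iteratedDeriv_succ_id_mul_zero {𝕜 : Type*} [NontriviallyNormedField 𝕜] {f : 𝕜 → 𝕜}
    {k : ℕ} (hf : ContDiffAt 𝕜 (k + 1 : ℕ) f 0) :
    iteratedDeriv (k + 1) (fun t ↦ t * f t) 0 = (k + 1) * iteratedDeriv k f 0 := by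
  rw [iteratedDeriv_fun_mul contDiffAt_fun_id hf, Finset.sum_eq_single 1]
  · simp [iteratedDeriv_fun_id_zero]
  · intro i _ hi
    simp [iteratedDeriv_fun_id_zero, hi]
  · simp

lemma integral_pow_add_two_gaussianReal (v : NNReal) (k : ℕ) :
    ∫ x, x ^ (k + 2) ∂gaussianReal 0 v = (k + 1) * v * ∫ x, x ^ k ∂gaussianReal 0 v := by
  have moment_eq (l : ℕ) :
      ∫ x, x ^ l ∂gaussianReal 0 v = iteratedDeriv l (mgf id (gaussianReal 0 v)) 0 := by
    simp [iteratedDeriv_mgf_zero (X := id) (μ := gaussianReal 0 v)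
      (by simp [integrableExpSet_id_gaussianReal])]
  have contDiff_mgf : ContDiff ℝ (k + 1 : ℕ) (mgf id (gaussianReal 0 v)) := by
    rw [mgf_id_gaussianReal]
    fun_prop
  have deriv_mgf : deriv (mgf id (gaussianReal 0 v))
      = fun t ↦ v * (t * mgf id (gaussianReal 0 v) t) := by
    ext t
    have deriv_exponent : HasDerivAt (fun t : ℝ ↦ 0 * t + v * t ^ 2 / 2) (v * t) t := by
      simpa using (((hasDerivAt_pow 2 t).const_mul (v : ℝ)).div_const 2).congr_deriv
        (g' := v * t) (by push_cast; ring)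
    rw [mgf_id_gaussianReal, deriv_exponent.exp.deriv]
    ring
  rw [moment_eq, moment_eq, iteratedDeriv_succ', deriv_mgf, iteratedDeriv_const_mul_field,
    iteratedDeriv_succ_id_mul_zero contDiff_mgf.contDiffAt]
  ring

lemma integral_sq_gaussianReal (v : NNReal) : ∫ x, x ^ 2 ∂gaussianReal 0 v = v := by
  simpa using integral_pow_add_two_gaussianReal v 0

lemma integral_pow_four_gaussianReal (v : NNReal) :
    ∫ x, x ^ 4 ∂gaussianReal 0 v = 3 * v ^ 2 := by
  rw [integral_pow_add_two_gaussianReal v 2, integral_sq_gaussianReal]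
  push_cast
  ring

lemma memLp_sq_gaussianReal (v : NNReal) :
    MemLp (fun x ↦ x ^ 2) 2 (gaussianReal 0 v) := by
  rw [memLp_two_iff_integrable_sq (by fun_prop)]
  convert (memLp_id_gaussianReal (μ := 0) (v := v) 4).integrable_norm_pow (by simp) using 2 with x
  simp [← pow_mul, (by decide : Even 4).pow_abs]

lemma variance_sq_gaussianReal (v : NNReal) :
    Var[fun x ↦ x ^ 2; gaussianReal 0 v] = 2 * v ^ 2 := by
  rw [variance_eq_sub (memLp_sq_gaussianReal v)]
  simp only [Pi.pow_apply, ← pow_mul, integral_sq_gaussianReal, integral_pow_four_gaussianReal]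
  ring

variable {ι : Type*} [Fintype ι]

lemma memLp_dotProduct_self_pi_gaussianReal (v : NNReal) :
    MemLp (fun z : ι → ℝ ↦ z ⬝ᵥ z) 2 (Measure.pi fun _ ↦ gaussianReal 0 v) := by
  simp only [dotProduct, ← pow_two]
  exact memLp_finsetSum _ fun i _ ↦
    (memLp_sq_gaussianReal v).comp_measurePreserving (measurePreserving_eval _ i)

lemma integral_dotProduct_self_pi_gaussianReal (v : NNReal) :
    ∫ z : ι → ℝ, z ⬝ᵥ z ∂Measure.pi (fun _ ↦ gaussianReal 0 v) = Fintype.card ι * v := by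
  have integrable_sq (i : ι) :
      Integrable (fun z : ι → ℝ ↦ z i ^ 2) (Measure.pi fun _ ↦ gaussianReal 0 v) :=
    ((memLp_sq_gaussianReal v).comp_measurePreserving
      (measurePreserving_eval _ i)).integrable one_le_two
  simp only [dotProduct, ← pow_two]
  rw [integral_finsetSum _ fun i _ ↦ integrable_sq i]
  simp [integral_comp_eval (μ := fun _ : ι ↦ gaussianReal 0 v) (f := fun x ↦ x ^ 2)
    (by fun_prop), integral_sq_gaussianReal]

lemma integral_dotProduct_self_sq_pi_gaussianReal (v : NNReal) :
    ∫ z : ι → ℝ, (z ⬝ᵥ z) ^ 2 ∂Measure.pi (fun _ ↦ gaussianReal 0 v)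
      = Fintype.card ι * (Fintype.card ι + 2) * v ^ 2 := by
  have variance_eq : Var[fun z : ι → ℝ ↦ z ⬝ᵥ z; Measure.pi fun _ ↦ gaussianReal 0 v]
      = Fintype.card ι * (2 * v ^ 2) := by
    convert variance_sum_pi (μ := fun _ : ι ↦ gaussianReal 0 v) (X := fun _ x ↦ x ^ 2)
      fun _ ↦ memLp_sq_gaussianReal v using 1
    · congr 1
      ext z
      simp [dotProduct, pow_two]
    · simp [variance_sq_gaussianReal]
  rw [variance_eq_sub (memLp_dotProduct_self_pi_gaussianReal v),
    integral_dotProduct_self_pi_gaussianReal] at variance_eq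
  simp only [Pi.pow_apply] at variance_eq
  linear_combination variance_eq

end GaussianMoments

section PosSemidef

variable {ι : Type*}

lemma convex_setOf_posSemidef : Convex ℝ {A : ι → ι → ℝ | (of A).PosSemidef} :=
  fun _ hA _ hB _ _ ha hb _ ↦ (hA.smul ha).add (hB.smul hb)

lemma isClosed_setOf_posSemidef [Finite ι] :
    IsClosed {A : ι → ι → ℝ | (of A).PosSemidef} := by
  cases nonempty_fintype ι
  simp only [posSemidef_iff_dotProduct_mulVec, Set.ofPred_and, Set.ofPred_forall]
  refine (isClosed_eq (continuous_id.matrix_conjTranspose) continuous_id).inter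
    (isClosed_iInter fun x ↦ isClosed_le continuous_const ?_)
  exact continuous_const.dotProduct (continuous_id.matrix_mulVec continuous_const)

variable [Fintype ι]

lemma trace_sq_le_trace_add_vecMulVec_sq [DecidableEq ι] {A : Matrix ι ι ℝ} (hA : A.PosSemidef)
    (v : ι → ℝ) : (A ^ 2).trace ≤ ((A + vecMulVec v v) ^ 2).trace := by
  have trace_mul_nonneg : 0 ≤ (A * vecMulVec v v).trace := by
    simpa [mul_vecMulVec, trace_vecMulVec, dotProduct_comm] using hA.dotProduct_mulVec_nonneg v
  have trace_sq_nonneg : 0 ≤ (vecMulVec v v * vecMulVec v v).trace := by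
    simpa [vecMulVec_mul_vecMulVec, trace_vecMulVec] using mul_self_nonneg (v ⬝ᵥ v)
  have trace_expand : ((A + vecMulVec v v) ^ 2).trace = (A ^ 2).trace
      + 2 * (A * vecMulVec v v).trace + (vecMulVec v v * vecMulVec v v).trace := by
    simp only [pow_two, add_mul, mul_add, trace_add, trace_mul_comm (vecMulVec v v) A]
    ring
  linarith

lemma trace_sq_eq_sum_sq [DecidableEq ι] {A : Matrix ι ι ℝ} (hA : A.IsHermitian) :
    (A ^ 2).trace = ∑ i, ∑ j, A i j ^ 2 := by
  simp only [trace, diag_apply, sq A, mul_apply]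
  refine Finset.sum_congr rfl fun i _ ↦ Finset.sum_congr rfl fun j _ ↦ ?_
  rw [← hA.apply j i, star_trivial, pow_two]

lemma sum_vecMulVec_self_sq (v : ι → ℝ) :
    ∑ i, ∑ j, vecMulVec v v i j ^ 2 = (v ⬝ᵥ v) ^ 2 := by
  rw [dotProduct, pow_two, Finset.sum_mul_sum]
  refine Finset.sum_congr rfl fun i _ ↦ Finset.sum_congr rfl fun j _ ↦ ?_
  rw [vecMulVec_apply]
  ring

lemma convexOn_sum_sq {κ : Type*} [Fintype κ] :
    ConvexOn ℝ Set.univ fun A : ι → κ → ℝ ↦ ∑ i, ∑ j, A i j ^ 2 := by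
  refine ⟨convex_univ, fun A _ B _ a b ha hb hab ↦ ?_⟩
  simp only [smul_eq_mul, Finset.mul_sum, ← Finset.sum_add_distrib]
  exact Finset.sum_le_sum fun i _ ↦ Finset.sum_le_sum fun j _ ↦
    even_two.convexOn_pow.2 trivial trivial ha hb hab

end PosSemidef

section Integrability

variable {Ω ι : Type*} [MeasurableSpace Ω] {μ : Measure Ω}

lemma memLp_comp_of_hasLaw {E F : Type*} [MeasurableSpace E] [NormedAddCommGroup F]
    {ν : Measure E} {V : Ω → E} {f : E → F} {p : ENNReal} (hV : HasLaw V ν μ)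
    (hf : MemLp f p ν) : MemLp (f ∘ V) p μ :=
  (hV.map_eq ▸ hf).comp_of_map hV.aemeasurable

lemma memLp_two_apply_of_integrable_sum_sq [Fintype ι] {V : Ω → ι → ℝ} (hV : Measurable V)
    (hV2 : Integrable (fun ω ↦ ∑ i, V ω i ^ 2) μ) (i : ι) : MemLp (fun ω ↦ V ω i) 2 μ := by
  have measurable_apply : Measurable fun ω ↦ V ω i := (measurable_pi_apply i).comp hV
  rw [memLp_two_iff_integrable_sq measurable_apply.aestronglyMeasurable]
  refine hV2.mono' (measurable_apply.pow_const 2).aestronglyMeasurable (ae_of_all _ fun ω ↦ ?_)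
  rw [Real.norm_of_nonneg (sq_nonneg _)]
  exact Finset.single_le_sum (fun j _ ↦ sq_nonneg (V ω j)) (Finset.mem_univ i)

lemma integrable_vecMulVec_self_apply {V : Ω → ι → ℝ} (hV : ∀ i, MemLp (fun ω ↦ V ω i) 2 μ)
    (i j : ι) : Integrable (fun ω ↦ vecMulVec (V ω) (V ω) i j) μ :=
  (hV i).integrable_mul (hV j)

end Integrability

section ConditionalExpectation

variable {Ω : Type*} {m m₀ : MeasurableSpace Ω} {μ : Measure Ω} {n : ℕ}

lemma ceMat_congr {M N : Ω → Matrix (Fin n) (Fin n) ℝ} (h : M =ᵐ[μ] N) :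
    ceMat m μ M =ᵐ[μ] ceMat m μ N := by
  have entry_congr (i j : Fin n) : μ[fun ω ↦ M ω i j | m] =ᵐ[μ] μ[fun ω ↦ N ω i j | m] :=
    condExp_congr_ae (h.fun_comp fun A ↦ A i j)
  filter_upwards [ae_all_iff.2 fun i ↦ ae_all_iff.2 fun j ↦ entry_congr i j] with ω h
  ext i j
  exact h i j

lemma ceMat_smul (c : ℝ) (M : Ω → Matrix (Fin n) (Fin n) ℝ) :
    ceMat m μ (c • M) =ᵐ[μ] c • ceMat m μ M := by
  have entry_smul (i j : Fin n) := condExp_smul (μ := μ) c (fun ω ↦ M ω i j) m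
  filter_upwards [ae_all_iff.2 fun i ↦ ae_all_iff.2 fun j ↦ entry_smul i j] with ω h
  ext i j
  exact h i j

lemma ceMat_ae_eq_condExp {M : Ω → Matrix (Fin n) (Fin n) ℝ}
    (hM : ∀ i j, Integrable (fun ω ↦ M ω i j) μ) :
    ∀ᵐ ω ∂μ, ceMat m μ M ω = of (μ[fun ω i j ↦ M ω i j | m] ω) := by
  have integrable_entries : Integrable (fun ω i j ↦ M ω i j) μ :=
    Integrable.of_eval fun i ↦ Integrable.of_eval fun j ↦ hM i j
  let entry (i j : Fin n) : (Fin n → Fin n → ℝ) →L[ℝ] ℝ :=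
    .comp (.proj (φ := fun _ ↦ ℝ) j) (.proj (φ := fun _ ↦ Fin n → ℝ) i)
  have entry_condExp (i j : Fin n) :
      (fun ω ↦ μ[fun ω i j ↦ M ω i j | m] ω i j) =ᵐ[μ] μ[fun ω ↦ M ω i j | m] :=
    (entry i j).comp_condExp_comm integrable_entries
  filter_upwards [ae_all_iff.2 fun i ↦ ae_all_iff.2 fun j ↦ entry_condExp i j] with ω h
  ext i j
  exact (h i j).symm

lemma trExp_le_integral {M : Ω → Matrix (Fin n) (Fin n) ℝ} {g : Ω → ℝ}
    (hM : ∀ i, AEStronglyMeasurable (fun ω ↦ M ω i i) μ) (hpos : ∀ᵐ ω ∂μ, (M ω).PosSemidef)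
    (hle : ∀ᵐ ω ∂μ, (M ω).trace ≤ g ω) (hg : Integrable g μ) : trExp μ M ≤ ∫ ω, g ω ∂μ := by
  have integrable_diag (i : Fin n) : Integrable (fun ω ↦ M ω i i) μ := by
    refine hg.mono' (hM i) ?_
    filter_upwards [hpos, hle] with ω hω hle
    rw [Real.norm_of_nonneg hω.diag_nonneg]
    exact (Finset.single_le_sum (f := (M ω).diag) (fun _ _ ↦ hω.diag_nonneg)
      (Finset.mem_univ i)).trans hle
  calc trExp μ M = ∫ ω, (M ω).trace ∂μ :=
        (integral_finsetSum Finset.univ fun i _ ↦ integrable_diag i).symm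
    _ ≤ ∫ ω, g ω ∂μ :=
        integral_mono_ae (integrable_finsetSum _ fun i _ ↦ integrable_diag i) hg hle

lemma aestronglyMeasurable_covMat_apply (V : Ω → Fin n → ℝ) (i j : Fin n) :
    AEStronglyMeasurable (fun ω ↦ covMat m μ V ω i j) μ :=
  integrable_condExp.aestronglyMeasurable.sub
    (integrable_condExp.aestronglyMeasurable.mul integrable_condExp.aestronglyMeasurable)

lemma aestronglyMeasurable_covMat_sq_apply (V : Ω → Fin n → ℝ) (i j : Fin n) :
    AEStronglyMeasurable (fun ω ↦ (covMat m μ V ω ^ 2) i j) μ := by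
  simp only [pow_two, mul_apply]
  exact Finset.aestronglyMeasurable_fun_sum _ fun k _ ↦
    (aestronglyMeasurable_covMat_apply V i k).mul (aestronglyMeasurable_covMat_apply V k j)

lemma posSemidef_ceMat (hm : m ≤ m₀) [SigmaFinite (μ.trim hm)]
    {M : Ω → Matrix (Fin n) (Fin n) ℝ} (hM : ∀ i j, Integrable (fun ω ↦ M ω i j) μ)
    (hpos : ∀ᵐ ω ∂μ, (M ω).PosSemidef) :
    ∀ᵐ ω ∂μ, (ceMat m μ M ω).PosSemidef := by
  filter_upwards [ceMat_ae_eq_condExp (m := m) hM, convex_setOf_posSemidef.condExp_mem hm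
    (.of_eval fun i ↦ .of_eval fun j ↦ hM i j) isClosed_setOf_posSemidef hpos] with ω h h'
  rwa [h]

lemma sum_ceMat_sq_le (hm : m ≤ m₀) [SigmaFinite (μ.trim hm)]
    {M : Ω → Matrix (Fin n) (Fin n) ℝ} (hM : ∀ i j, Integrable (fun ω ↦ M ω i j) μ)
    (hM2 : Integrable (fun ω ↦ ∑ i, ∑ j, M ω i j ^ 2) μ) :
    ∀ᵐ ω ∂μ, ∑ i, ∑ j, ceMat m μ M ω i j ^ 2 ≤ (μ[fun ω ↦ ∑ i, ∑ j, M ω i j ^ 2 | m]) ω := by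
  filter_upwards [ceMat_ae_eq_condExp (m := m) hM,
    convexOn_sum_sq.map_condExp_le_of_finiteDimensional (f := fun ω i j ↦ M ω i j) hm
      (.of_eval fun i ↦ .of_eval fun j ↦ hM i j) hM2] with ω h hjensen
  rw [h]
  exact hjensen

lemma ceVec_smul_add (hm : m ≤ m₀) [SigmaFinite (μ.trim hm)] {V U : Ω → Fin n → ℝ}
    (c : ℝ) (hV : ∀ i, Integrable (fun ω ↦ V ω i) μ) (hU : ∀ i, Integrable (fun ω ↦ U ω i) μ)
    (hUm : ∀ i, StronglyMeasurable[m] fun ω ↦ U ω i) :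
    ceVec m μ (c • V + U) =ᵐ[μ] c • ceVec m μ V + U := by
  have entry_add (i : Fin n) := condExp_add ((hV i).smul c) (hU i) m
  have entry_smul (i : Fin n) := condExp_smul (μ := μ) c (fun ω ↦ V ω i) m
  filter_upwards [ae_all_iff.2 entry_add, ae_all_iff.2 entry_smul] with ω hadd hsmul
  ext i
  refine (hadd i).trans ?_
  rw [Pi.add_apply, hsmul i, condExp_of_stronglyMeasurable hm (hUm i) (hU i)]
  rfl

variable [IsFiniteMeasure μ]

lemma condExp_sub_condExp_mul_sub_condExp (hm : m ≤ m₀) {f g : Ω → ℝ}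
    (hf : MemLp f 2 μ) (hg : MemLp g 2 μ) :
    μ[(f - μ[f | m]) * (g - μ[g | m]) | m] =ᵐ[μ] μ[f * g | m] - μ[f | m] * μ[g | m] := by
  have hf' : MemLp (μ[f | m]) 2 μ := hf.condExp one_le_two
  have hg' : MemLp (μ[g | m]) 2 μ := hg.condExp one_le_two
  have expand : (f - μ[f | m]) * (g - μ[g | m])
      = f * g - μ[f | m] * g - (f - μ[f | m]) * μ[g | m] := by ring
  have pull_left : μ[μ[f | m] * g | m] =ᵐ[μ] μ[f | m] * μ[g | m] :=
    condExp_mul_of_stronglyMeasurable_left stronglyMeasurable_condExp (hf'.integrable_mul hg)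
      (hg.integrable one_le_two)
  have pull_right : μ[(f - μ[f | m]) * μ[g | m] | m] =ᵐ[μ] μ[f - μ[f | m] | m] * μ[g | m] :=
    condExp_mul_of_stronglyMeasurable_right stronglyMeasurable_condExp
      ((hf.sub hf').integrable_mul hg') ((hf.sub hf').integrable one_le_two)
  have centered : μ[f - μ[f | m] | m] =ᵐ[μ] 0 := by
    filter_upwards [condExp_sub (hf.integrable one_le_two) (integrable_condExp (f := f)) m] with ω h
    rw [h, condExp_of_stronglyMeasurable hm stronglyMeasurable_condExp integrable_condExp]
    simp
  rw [expand]
  filter_upwards [condExp_sub ((hf.integrable_mul hg).sub (hf'.integrable_mul hg))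
      ((hf.sub hf').integrable_mul hg') m,
    condExp_sub (hf.integrable_mul hg) (hf'.integrable_mul hg) m, pull_left, pull_right, centered]
    with ω h₁ h₂ h₃ h₄ h₅
  simp [h₁, h₂, h₃, h₄, h₅]

lemma covMat_ae_eq_ceMat_centered (hm : m ≤ m₀) {V : Ω → Fin n → ℝ}
    (hV : ∀ i, MemLp (fun ω ↦ V ω i) 2 μ) :
    covMat m μ V =ᵐ[μ]
      ceMat m μ fun ω ↦ vecMulVec (V ω - ceVec m μ V ω) (V ω - ceVec m μ V ω) := by
  have entry_eq (i j : Fin n) := condExp_sub_condExp_mul_sub_condExp hm (hV i) (hV j)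
  filter_upwards [ae_all_iff.2 fun i ↦ ae_all_iff.2 fun j ↦ entry_eq i j] with ω h
  ext i j
  exact (h i j).symm

lemma posSemidef_covMat (hm : m ≤ m₀) {V : Ω → Fin n → ℝ}
    (hV : ∀ i, MemLp (fun ω ↦ V ω i) 2 μ) : ∀ᵐ ω ∂μ, (covMat m μ V ω).PosSemidef := by
  have centered_memLp (i : Fin n) : MemLp (fun ω ↦ (V ω - ceVec m μ V ω) i) 2 μ :=
    (hV i).sub ((hV i).condExp one_le_two)
  filter_upwards [covMat_ae_eq_ceMat_centered hm hV,
    posSemidef_ceMat hm (integrable_vecMulVec_self_apply centered_memLp)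
      (ae_of_all _ fun ω ↦ posSemidef_vecMulVec_self_star _)] with ω h h'
  rwa [h]

lemma covMat_smul_add (hm : m ≤ m₀) {V U : Ω → Fin n → ℝ} (c : ℝ)
    (hV : ∀ i, MemLp (fun ω ↦ V ω i) 2 μ) (hU : ∀ i, MemLp (fun ω ↦ U ω i) 2 μ)
    (hUm : ∀ i, StronglyMeasurable[m] fun ω ↦ U ω i) :
    covMat m μ (c • V + U) =ᵐ[μ] c ^ 2 • covMat m μ V := by
  let outer (W : Ω → Fin n → ℝ) (ω : Ω) := vecMulVec (W ω - ceVec m μ W ω) (W ω - ceVec m μ W ω)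
  have outer_smul_add : outer (c • V + U) =ᵐ[μ] c ^ 2 • outer V := by
    filter_upwards [ceVec_smul_add hm c (fun i ↦ (hV i).integrable one_le_two)
      (fun i ↦ (hU i).integrable one_le_two) hUm] with ω h
    ext i j
    simp only [outer, h, vecMulVec_apply, Pi.add_apply, Pi.sub_apply, Pi.smul_apply,
      Matrix.smul_apply, smul_eq_mul, add_sub_add_right_eq_sub]
    ring
  calc covMat m μ (c • V + U)
      =ᵐ[μ] ceMat m μ (outer (c • V + U)) :=
        covMat_ae_eq_ceMat_centered hm fun i ↦ ((hV i).const_smul c).add (hU i)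
    _ =ᵐ[μ] ceMat m μ (c ^ 2 • outer V) := ceMat_congr outer_smul_add
    _ =ᵐ[μ] c ^ 2 • ceMat m μ (outer V) := ceMat_smul _ _
    _ =ᵐ[μ] c ^ 2 • covMat m μ V := (covMat_ae_eq_ceMat_centered hm hV).symm.const_smul _

lemma trace_covMat_sq_le (hm : m ≤ m₀) {V : Ω → Fin n → ℝ}
    (hV : ∀ i, MemLp (fun ω ↦ V ω i) 2 μ) (hV4 : Integrable (fun ω ↦ (V ω ⬝ᵥ V ω) ^ 2) μ) :
    ∀ᵐ ω ∂μ, (covMat m μ V ω ^ 2).trace ≤ (μ[fun ω ↦ (V ω ⬝ᵥ V ω) ^ 2 | m]) ω := by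
  have second_moment_eq (ω : Ω) : ceMat m μ (fun ω ↦ vecMulVec (V ω) (V ω)) ω
      = covMat m μ V ω + vecMulVec (ceVec m μ V ω) (ceVec m μ V ω) := (sub_add_cancel _ _).symm
  have jensen := sum_ceMat_sq_le hm (integrable_vecMulVec_self_apply hV)
    (by simpa only [sum_vecMulVec_self_sq] using hV4)
  simp only [sum_vecMulVec_self_sq] at jensen
  filter_upwards [jensen, posSemidef_covMat hm hV,
    posSemidef_ceMat hm (integrable_vecMulVec_self_apply hV)
      (ae_of_all _ fun ω ↦ posSemidef_vecMulVec_self_star (V ω))] with ω hjensen hcov hsecond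
  calc (covMat m μ V ω ^ 2).trace
      ≤ (ceMat m μ (fun ω ↦ vecMulVec (V ω) (V ω)) ω ^ 2).trace := by
        rw [second_moment_eq]
        exact trace_sq_le_trace_add_vecMulVec_sq hcov _
    _ = ∑ i, ∑ j, ceMat m μ (fun ω ↦ vecMulVec (V ω) (V ω)) ω i j ^ 2 :=
        trace_sq_eq_sum_sq hsecond.isHermitian
    _ ≤ _ := hjensen

lemma covMat_noise_ae_eq_smul (hm : m ≤ m₀) {X Z : Ω → Fin n → ℝ} {snr : ℝ} (hsnr : 0 ≤ snr)
    (hX : ∀ i, MemLp (fun ω ↦ X ω i) 2 μ) (hZ : ∀ i, MemLp (fun ω ↦ Z ω i) 2 μ)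
    (hobs : Measurable[m] (obs X Z snr)) : covMat m μ Z =ᵐ[μ] snr • covMat m μ X := by
  have noise_eq : Z = -√snr • X + obs X Z snr := by
    ext ω i
    simp [obs]
  have obs_memLp (i : Fin n) : MemLp (fun ω ↦ obs X Z snr ω i) 2 μ :=
    ((hX i).const_mul √snr).add (hZ i)
  have obs_stronglyMeasurable (i : Fin n) : StronglyMeasurable[m] fun ω ↦ obs X Z snr ω i :=
    ((measurable_pi_apply i).comp hobs).stronglyMeasurable
  have cov_eq := covMat_smul_add hm (-√snr) hX obs_memLp obs_stronglyMeasurable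
  rwa [← noise_eq, neg_sq, Real.sq_sqrt hsnr] at cov_eq

lemma trExp_covMat_sq_le (hm : m ≤ m₀) {X Z : Ω → Fin n → ℝ} {snr : ℝ} (hsnr : 0 < snr)
    (hX : ∀ i, MemLp (fun ω ↦ X ω i) 2 μ) (hZ : ∀ i, MemLp (fun ω ↦ Z ω i) 2 μ)
    (hZ4 : Integrable (fun ω ↦ (Z ω ⬝ᵥ Z ω) ^ 2) μ) (hobs : Measurable[m] (obs X Z snr)) :
    trExp μ (fun ω ↦ covMat m μ X ω ^ 2) ≤ (∫ ω, (Z ω ⬝ᵥ Z ω) ^ 2 ∂μ) / snr ^ 2 := by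
  have trace_le : ∀ᵐ ω ∂μ, (covMat m μ X ω ^ 2).trace
      ≤ (μ[fun ω ↦ (Z ω ⬝ᵥ Z ω) ^ 2 | m]) ω / snr ^ 2 := by
    filter_upwards [trace_covMat_sq_le hm hZ hZ4, covMat_noise_ae_eq_smul hm hsnr.le hX hZ hobs]
      with ω hle hnoise
    rw [le_div_iff₀' (pow_pos hsnr 2), ← smul_eq_mul, ← trace_smul, ← smul_pow]
    rwa [hnoise] at hle
  calc trExp μ (fun ω ↦ covMat m μ X ω ^ 2)
      ≤ ∫ ω, (μ[fun ω ↦ (Z ω ⬝ᵥ Z ω) ^ 2 | m]) ω / snr ^ 2 ∂μ :=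
        trExp_le_integral (fun i ↦ aestronglyMeasurable_covMat_sq_apply X i i)
          ((posSemidef_covMat hm hX).mono fun ω h ↦ h.pow 2) trace_le
          (integrable_condExp.div_const _)
    _ = (∫ ω, (Z ω ⬝ᵥ Z ω) ^ 2 ∂μ) / snr ^ 2 := by rw [integral_div, integral_condExp hm]

end ConditionalExpectation

lemma measurable_obs {Ω : Type*} [MeasurableSpace Ω] {n : ℕ} {X Z : Ω → Fin n → ℝ}
    (hX : Measurable X) (hZ : Measurable Z) (snr : ℝ) : Measurable (obs X Z snr) :=
  (hX.const_smul √snr).add hZ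

theorem derivative_mmse_simple_bound_general {Ω : Type*} {m m₀ : MeasurableSpace Ω}
    {μ : Measure Ω} {n : ℕ} (hn : 1 ≤ n) {X Z : Ω → Fin n → ℝ}
    (hX : ∀ i, MemLp (fun ω ↦ X ω i) 2 μ)
    (hZ : HasLaw Z (Measure.pi fun _ ↦ gaussianReal 0 1) μ)
    {snr : ℝ} (hsnr : 0 < snr) (hm : m ≤ m₀) (hobs : Measurable[m] (obs X Z snr)) :
    (1 / (n : ℝ)) * trExp μ (fun ω ↦ covMat m μ X ω ^ 2) ≤ ((n : ℝ) + 2) / snr ^ 2 := by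
  have := hZ.isProbabilityMeasure
  have noise_memLp (i : Fin n) : MemLp (fun ω ↦ Z ω i) 2 μ :=
    memLp_comp_of_hasLaw hZ
      ((memLp_id_gaussianReal 2).comp_measurePreserving (measurePreserving_eval _ i))
  have noise_integrable : Integrable (fun ω ↦ (Z ω ⬝ᵥ Z ω) ^ 2) μ :=
    (memLp_comp_of_hasLaw hZ (memLp_dotProduct_self_pi_gaussianReal 1)).integrable_sq
  have noise_moment : ∫ ω, (Z ω ⬝ᵥ Z ω) ^ 2 ∂μ = n * (n + 2) := by
    have law_moment := hZ.integral_comp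
      (memLp_dotProduct_self_pi_gaussianReal 1).integrable_sq.aestronglyMeasurable
    simpa [Function.comp_def, integral_dotProduct_self_sq_pi_gaussianReal] using law_moment
  calc (1 / (n : ℝ)) * trExp μ (fun ω ↦ covMat m μ X ω ^ 2)
      ≤ 1 / n * ((∫ ω, (Z ω ⬝ᵥ Z ω) ^ 2 ∂μ) / snr ^ 2) := by
        gcongr
        exact trExp_covMat_sq_le hm hsnr hX noise_memLp noise_integrable hobs
    _ = (n + 2) / snr ^ 2 := by
        rw [noise_moment]
        field_simp

/-- **Proposition 9 (simplified form, `k_n ≤ n+2`).**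
`(1/n)·Tr(E[(Cov(X|Y))²]) ≤ (n+2)/snr²`. -/
theorem derivative_mmse_simple_bound {Ω : Type*} [MeasurableSpace Ω] (μ : Measure Ω) [IsProbabilityMeasure μ]
    (n : ℕ) (hn : 1 ≤ n) (X Z : Ω → Fin n → ℝ)
    (hX : Measurable X) (hZ : Measurable Z)
    (hZlaw : Measure.map Z μ = Measure.pi fun _ : Fin n => gaussianReal 0 1)
    (hindep : IndepFun X Z μ)
    (hX2 : Integrable (fun ω => ∑ i, (X ω i) ^ 2) μ)
    (snr : ℝ) (hsnr : 0 < snr) :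
    (1 / (n : ℝ)) * trExp μ (fun ω => (covMat (obsSigma X Z snr) μ X ω) ^ 2) ≤
      ((n : ℝ) + 2) / snr ^ 2 :=
  derivative_mmse_simple_bound_general hn (memLp_two_apply_of_integrable_sum_sq hX hX2)
    ⟨hZ.aemeasurable, hZlaw⟩ hsnr (measurable_obs hX hZ snr).comap_le (comap_measurable _)

end
end

section
/- (Proposition 10, lower bound on the squared Fisher information of the output.) For every n ≥ 1, every random vector X in ℝⁿ with (1/n)·E[‖X‖²] ≤ 1 (equivalently (1/n)·Tr(E[X Xᵀ]) ≤ 1), and every snr > 0, Tr((Iₙ − snr·E[Cov(X|Y_snr)])²) ≥ n/(1+snr)². Moreover, equality holds when X ~ N(0, Iₙ). -/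
open MeasureTheory ProbabilityTheory Real Matrix

noncomputable section

/-!
Signal and noise enter the lower bound only through their second moments. The conditional mean is
the best square-integrable estimator of `X` from `Y`, so the trace of `E[Cov(X|Y)]` is at most the
error of the Wiener estimator `g • Y`; for power `p` per coordinate this error is at most
`n p / (1 + snr p)`, which bounds the trace of `A = I - snr E[Cov(X|Y)]` below by
`n t` with `t = 1 / (1 + snr p)`. As `A` is symmetric, `tr (A - t I)² ≥ 0` then gives
`tr A² ≥ n t²`. When signal and noise are Gaussian, the residual `X - g • Y` is jointly Gaussian
with `Y` and uncorrelated with it, hence independent of it, so the Wiener estimator is the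
conditional mean and `A = t I`.
-/

open scoped NNReal

section TraceSquare

lemma card_mul_sq_le_trace_sq_of_card_mul_le_trace {ι : Type*} [Fintype ι] [DecidableEq ι]
    {A : Matrix ι ι ℝ} (hA : A.IsSymm) {t : ℝ} (ht : 0 ≤ t)
    (htr : Fintype.card ι * t ≤ A.trace) : Fintype.card ι * t ^ 2 ≤ (A ^ 2).trace := by
  have hdev : 0 ≤ ((A - t • 1) ^ 2).trace := by
    have h := (posSemidef_conjTranspose_mul_self (A - t • 1)).trace_nonneg
    rwa [conjTranspose_eq_transpose_of_trivial, (hA.sub (isSymm_one.smul t)).eq, ← sq] at h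
  have hexpand : ((A - t • 1) ^ 2).trace =
      (A ^ 2).trace - 2 * t * A.trace + t ^ 2 * Fintype.card ι := by
    have hsq : (A - t • 1) ^ 2 = A ^ 2 - (2 * t) • A + t ^ 2 • (1 : Matrix ι ι ℝ) := by
      rw [sq, sq, sub_mul, mul_sub, mul_sub, smul_mul_smul_comm, mul_one, smul_one_mul,
        mul_smul_one, ← sq]
      module
    simp only [hsq, trace_add, trace_sub, trace_smul, trace_one, smul_eq_mul]
  nlinarith [mul_le_mul_of_nonneg_left htr ht]

end TraceSquare

section SecondMoments

variable {Ω ι : Type*} [MeasurableSpace Ω] [Fintype ι] {μ : Measure Ω} {X Z : Ω → ι → ℝ}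

lemma memLp_two_of_integrable_sum_sq (hX : AEStronglyMeasurable X μ)
    (hXsq : Integrable (fun ω => ∑ i, X ω i ^ 2) μ) : MemLp X 2 μ := by
  refine MemLp.of_eval fun i => ?_
  have hXi : AEStronglyMeasurable (fun ω => X ω i) μ :=
    (continuous_apply i).comp_aestronglyMeasurable hX
  refine (memLp_two_iff_integrable_sq hXi).mpr (hXsq.mono' (hXi.pow 2) (ae_of_all μ fun ω => ?_))
  rw [Real.norm_of_nonneg (sq_nonneg _)]
  exact Finset.single_le_sum (f := fun j => X ω j ^ 2) (fun j _ => sq_nonneg _)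
    (Finset.mem_univ i)

lemma integral_dotProduct_eq_zero_of_indepFun (hX : MemLp X 2 μ) (hZ : MemLp Z 2 μ)
    (hindep : IndepFun X Z μ) (hmean : ∀ i, ∫ ω, Z ω i ∂μ = 0) :
    ∫ ω, X ω ⬝ᵥ Z ω ∂μ = 0 := by
  have hcoord (i : ι) : IndepFun (fun ω => X ω i) (fun ω => Z ω i) μ :=
    hindep.comp (measurable_pi_apply i) (measurable_pi_apply i)
  have hint (i : ι) : Integrable (fun ω => X ω i * Z ω i) μ :=
    (hX.eval i).integrable_mul (hZ.eval i)
  simp only [dotProduct]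
  rw [integral_finsetSum _ fun i _ => hint i]
  refine Finset.sum_eq_zero fun i _ => ?_
  rw [(hcoord i).integral_fun_mul_eq_mul_integral (hX.eval i).aestronglyMeasurable
    (hZ.eval i).aestronglyMeasurable, hmean, mul_zero]

end SecondMoments

section ConditionalExpectation

variable {Ω : Type*} {m m₀ : MeasurableSpace Ω} {μ : Measure Ω} [IsFiniteMeasure μ]

lemma integral_sub_condExp_mul_eq_zero (hm : m ≤ m₀) {f g : Ω → ℝ} (hf : MemLp f 2 μ)
    (hg : MemLp g 2 μ) (hgm : StronglyMeasurable[m] g) :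
    ∫ ω, (f ω - (μ[f | m]) ω) * g ω ∂μ = 0 := by
  have hfg : Integrable (f * g) μ := hf.integrable_mul hg
  have hcg : Integrable (μ[f | m] * g) μ := (hf.condExp one_le_two).integrable_mul hg
  have hpull : ∫ ω, (f * g) ω ∂μ = ∫ ω, (μ[f | m] * g) ω ∂μ := by
    rw [← integral_condExp hm]
    exact integral_congr_ae
      (condExp_mul_of_stronglyMeasurable_right hgm hfg (hf.integrable one_le_two))
  simp only [sub_mul]
  exact (integral_sub hfg hcg).trans (sub_eq_zero.mpr hpull)

lemma integral_sub_condExp_sq_le (hm : m ≤ m₀) {f g : Ω → ℝ} (hf : MemLp f 2 μ)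
    (hg : MemLp g 2 μ) (hgm : StronglyMeasurable[m] g) :
    ∫ ω, (f ω - (μ[f | m]) ω) ^ 2 ∂μ ≤ ∫ ω, (f ω - g ω) ^ 2 ∂μ := by
  have hc : MemLp (μ[f | m]) 2 μ := hf.condExp one_le_two
  have herr : Integrable (fun ω => (f ω - (μ[f | m]) ω) ^ 2) μ := (hf.sub hc).integrable_sq
  have hgap : Integrable (fun ω => ((μ[f | m]) ω - g ω) ^ 2) μ := (hc.sub hg).integrable_sq
  have hcross : Integrable (fun ω => (f ω - (μ[f | m]) ω) * ((μ[f | m]) ω - g ω)) μ :=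
    (hf.sub hc).integrable_mul (hc.sub hg)
  have horth : ∫ ω, (f ω - (μ[f | m]) ω) * ((μ[f | m]) ω - g ω) ∂μ = 0 :=
    integral_sub_condExp_mul_eq_zero hm hf (hc.sub hg) (stronglyMeasurable_condExp.sub hgm)
  calc ∫ ω, (f ω - (μ[f | m]) ω) ^ 2 ∂μ
      ≤ ∫ ω, (f ω - (μ[f | m]) ω) ^ 2 ∂μ + ∫ ω, ((μ[f | m]) ω - g ω) ^ 2 ∂μ :=
        le_add_of_nonneg_right (integral_nonneg fun ω => sq_nonneg _)
    _ = ∫ ω, (f ω - (μ[f | m]) ω) ^ 2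
          + 2 * ((f ω - (μ[f | m]) ω) * ((μ[f | m]) ω - g ω))
          + ((μ[f | m]) ω - g ω) ^ 2 ∂μ := by
        rw [integral_add (by fun_prop) hgap, integral_add herr (by fun_prop), integral_const_mul,
          horth, mul_zero, add_zero]
    _ = ∫ ω, (f ω - g ω) ^ 2 ∂μ := by
        congr with ω
        ring

lemma condExp_ae_eq_of_indep_sub (hm : m ≤ m₀) {f g : Ω → ℝ} (hf : Measurable f)
    (hfint : Integrable f μ) (hgint : Integrable g μ) (hgm : StronglyMeasurable[m] g)
    (hindep : Indep (MeasurableSpace.comap (f - g) inferInstance) m μ)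
    (hmean : ∫ ω, (f - g) ω ∂μ = 0) : μ[f | m] =ᵐ[μ] g := by
  have hres : μ[f - g | m] =ᵐ[μ] fun _ => 0 := by
    have h := condExp_indep_eq (hf.sub (hgm.mono hm).measurable).comap_le hm
      (comap_measurable (f - g)).stronglyMeasurable hindep
    rwa [hmean] at h
  have hg : μ[g | m] = g := condExp_of_stronglyMeasurable hm hgm hgint
  filter_upwards [condExp_sub hfint hgint m, hres] with ω hsub hzero
  rw [hzero, Pi.sub_apply, hg] at hsub
  exact sub_eq_zero.mp hsub.symm

variable {n : ℕ} {V W : Ω → Fin n → ℝ}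

lemma expMat_covMat_apply (hm : m ≤ m₀) (hV : MemLp V 2 μ) (i j : Fin n) :
    expMat μ (covMat m μ V) i j =
      ∫ ω, (V ω i - ceVec m μ V ω i) * (V ω j - ceVec m μ V ω j) ∂μ := by
  have hc (k : Fin n) : MemLp (fun ω => ceVec m μ V ω k) 2 μ := (hV.eval k).condExp one_le_two
  have horth {g : Ω → ℝ} (k : Fin n) (hg : MemLp g 2 μ) (hgm : StronglyMeasurable[m] g) :
      ∫ ω, (V ω k - ceVec m μ V ω k) * g ω ∂μ = 0 :=
    integral_sub_condExp_mul_eq_zero hm (hV.eval k) hg hgm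
  have hVV : Integrable (fun ω => V ω i * V ω j) μ := (hV.eval i).integrable_mul (hV.eval j)
  have hcc : Integrable (fun ω => ceVec m μ V ω i * ceVec m μ V ω j) μ :=
    (hc i).integrable_mul (hc j)
  have hij : Integrable (fun ω => (V ω i - ceVec m μ V ω i) * ceVec m μ V ω j) μ :=
    ((hV.eval i).sub (hc i)).integrable_mul (hc j)
  have hji : Integrable (fun ω => (V ω j - ceVec m μ V ω j) * ceVec m μ V ω i) μ :=
    ((hV.eval j).sub (hc j)).integrable_mul (hc i)
  calc expMat μ (covMat m μ V) i j
      = ∫ ω, V ω i * V ω j ∂μ - ∫ ω, ceVec m μ V ω i * ceVec m μ V ω j ∂μ := by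
        simp only [expMat, covMat, ceMat, of_apply, Matrix.sub_apply, vecMulVec_apply]
        rw [integral_sub integrable_condExp hcc, integral_condExp hm]
    _ = ∫ ω, V ω i * V ω j - ceVec m μ V ω i * ceVec m μ V ω j
          - (V ω i - ceVec m μ V ω i) * ceVec m μ V ω j
          - (V ω j - ceVec m μ V ω j) * ceVec m μ V ω i ∂μ := by
        rw [integral_sub (by fun_prop) hji, integral_sub (by fun_prop) hij, integral_sub hVV hcc,
          horth i (hc j) stronglyMeasurable_condExp, horth j (hc i) stronglyMeasurable_condExp,
          sub_zero, sub_zero]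
    _ = ∫ ω, (V ω i - ceVec m μ V ω i) * (V ω j - ceVec m μ V ω j) ∂μ := by
        congr with ω
        ring

lemma isSymm_expMat_covMat (hm : m ≤ m₀) (hV : MemLp V 2 μ) :
    (expMat μ (covMat m μ V)).IsSymm :=
  IsSymm.ext fun i j => by simp only [expMat_covMat_apply hm hV, mul_comm]

lemma trace_expMat_covMat_le (hm : m ≤ m₀) (hV : MemLp V 2 μ) (hW : MemLp W 2 μ)
    (hWm : Measurable[m] W) :
    (expMat μ (covMat m μ V)).trace ≤ ∫ ω, ∑ i, (V ω i - W ω i) ^ 2 ∂μ := by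
  have herr (i : Fin n) : Integrable (fun ω => (V ω i - W ω i) ^ 2) μ :=
    ((hV.eval i).sub (hW.eval i)).integrable_sq
  rw [integral_finsetSum _ fun i _ => herr i]
  refine Finset.sum_le_sum fun i _ => ?_
  simp only [diag_apply, expMat_covMat_apply hm hV, ← sq]
  exact integral_sub_condExp_sq_le hm (hV.eval i) (hW.eval i)
    ((measurable_pi_apply i).comp hWm).stronglyMeasurable

end ConditionalExpectation

section GaussianCoordinates

variable {Ω ι : Type*} [MeasurableSpace Ω] [Fintype ι] {μ : Measure Ω} {X : Ω → ι → ℝ}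

lemma hasLaw_eval_of_hasLaw_pi {ν : ι → Measure ℝ} [∀ i, IsProbabilityMeasure (ν i)]
    (hX : HasLaw X (Measure.pi ν) μ) (i : ι) : HasLaw (fun ω => X ω i) (ν i) μ :=
  (measurePreserving_eval ν i).hasLaw.fun_comp hX

lemma iIndepFun_eval_of_hasLaw_pi {ν : ι → Measure ℝ} [∀ i, IsProbabilityMeasure (ν i)]
    (hX : HasLaw X (Measure.pi ν) μ) : iIndepFun (fun i ω => X ω i) μ := by
  have := hX.isProbabilityMeasure
  exact (iIndepFun_iff_hasLaw_pi_pi (hasLaw_eval_of_hasLaw_pi hX)).mpr hX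

lemma hasGaussianLaw_of_hasLaw_pi {ν : ι → Measure ℝ} [∀ i, IsGaussian (ν i)]
    (hX : HasLaw X (Measure.pi ν) μ) : HasGaussianLaw X μ :=
  (iIndepFun_eval_of_hasLaw_pi hX).hasGaussianLaw
    fun i => (hasLaw_eval_of_hasLaw_pi hX i).hasGaussianLaw

variable {v : ℝ≥0}

lemma integral_eval_of_hasLaw_pi_gaussianReal
    (hX : HasLaw X (Measure.pi fun _ => gaussianReal 0 v) μ) (i : ι) : ∫ ω, X ω i ∂μ = 0 :=
  (hasLaw_eval_of_hasLaw_pi hX i).integral_eq.trans integral_id_gaussianReal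

lemma variance_eval_of_hasLaw_pi_gaussianReal
    (hX : HasLaw X (Measure.pi fun _ => gaussianReal 0 v) μ) (i : ι) :
    Var[fun ω => X ω i; μ] = v :=
  (hasLaw_eval_of_hasLaw_pi hX i).variance_eq.trans variance_id_gaussianReal

lemma integral_sum_sq_of_hasLaw_pi_gaussianReal
    (hX : HasLaw X (Measure.pi fun _ => gaussianReal 0 v) μ) :
    ∫ ω, ∑ i, X ω i ^ 2 ∂μ = Fintype.card ι * v := by
  have hX2 := (hasGaussianLaw_of_hasLaw_pi hX).memLp_two
  have hsq (i : ι) : ∫ ω, X ω i ^ 2 ∂μ = v := by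
    rw [← variance_eval_of_hasLaw_pi_gaussianReal hX i, variance_of_integral_eq_zero
      (hX2.eval i).aemeasurable (integral_eval_of_hasLaw_pi_gaussianReal hX i)]
  rw [integral_finsetSum _ fun i _ => (hX2.eval i).integrable_sq]
  simp only [hsq, Finset.sum_const, Finset.card_univ, nsmul_eq_mul]

lemma covariance_eval_of_hasLaw_pi_gaussianReal [DecidableEq ι]
    (hX : HasLaw X (Measure.pi fun _ => gaussianReal 0 v) μ) (i j : ι) :
    cov[fun ω => X ω i, fun ω => X ω j; μ] = if i = j then (v : ℝ) else 0 := by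
  have hX2 := (hasGaussianLaw_of_hasLaw_pi hX).memLp_two
  split_ifs with hij
  · subst hij
    rw [covariance_self (hX2.eval i).aemeasurable, variance_eval_of_hasLaw_pi_gaussianReal hX]
  · exact ((iIndepFun_eval_of_hasLaw_pi hX).indepFun hij).covariance_eq_zero
      (hX2.eval i) (hX2.eval j)

lemma covariance_linearCombination [IsFiniteMeasure μ] {U V U' V' : Ω → ℝ} (hU : MemLp U 2 μ)
    (hV : MemLp V 2 μ) (hU' : MemLp U' 2 μ) (hV' : MemLp V' 2 μ) (hUV' : cov[U, V'; μ] = 0)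
    (hVU' : cov[V, U'; μ] = 0) (a b a' b' : ℝ) :
    cov[fun ω => a * U ω + b * V ω, fun ω => a' * U' ω + b' * V' ω; μ] =
      a * a' * cov[U, U'; μ] + b * b' * cov[V, V'; μ] := by
  change cov[a • U + b • V, a' • U' + b' • V'; μ] = _
  rw [covariance_add_left (hU.const_smul a) (hV.const_smul b)
      ((hU'.const_smul a').add (hV'.const_smul b')),
    covariance_add_right (hU.const_smul a) (hU'.const_smul a') (hV'.const_smul b'),
    covariance_add_right (hV.const_smul b) (hU'.const_smul a') (hV'.const_smul b')]
  simp only [covariance_smul_left, covariance_smul_right, hUV', hVU']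
  ring

variable {Z : Ω → ι → ℝ} {w : ℝ≥0}

lemma integral_linearCombination_eval_of_gaussian
    (hX : HasLaw X (Measure.pi fun _ => gaussianReal 0 v) μ)
    (hZ : HasLaw Z (Measure.pi fun _ => gaussianReal 0 w) μ) (a b : ℝ) (i : ι) :
    ∫ ω, a * X ω i + b * Z ω i ∂μ = 0 := by
  have hXint := (hasGaussianLaw_of_hasLaw_pi hX).integrable.eval i
  have hZint := (hasGaussianLaw_of_hasLaw_pi hZ).integrable.eval i
  rw [integral_add (hXint.const_mul a) (hZint.const_mul b), integral_const_mul,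
    integral_const_mul, integral_eval_of_hasLaw_pi_gaussianReal hX,
    integral_eval_of_hasLaw_pi_gaussianReal hZ, mul_zero, mul_zero, add_zero]

lemma covariance_linearCombination_eval_of_gaussian [DecidableEq ι]
    (hX : HasLaw X (Measure.pi fun _ => gaussianReal 0 v) μ)
    (hZ : HasLaw Z (Measure.pi fun _ => gaussianReal 0 w) μ) (hindep : IndepFun X Z μ)
    (a b a' b' : ℝ) (i j : ι) :
    cov[fun ω => a * X ω i + b * Z ω i, fun ω => a' * X ω j + b' * Z ω j; μ] =
      if i = j then a * a' * v + b * b' * w else 0 := by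
  have hX2 := (hasGaussianLaw_of_hasLaw_pi hX).memLp_two
  have hZ2 := (hasGaussianLaw_of_hasLaw_pi hZ).memLp_two
  have := hX.isProbabilityMeasure
  have hXZ (k l : ι) : cov[fun ω => X ω k, fun ω => Z ω l; μ] = 0 :=
    (hindep.comp (measurable_pi_apply k) (measurable_pi_apply l)).covariance_eq_zero
      (hX2.eval k) (hZ2.eval l)
  rw [covariance_linearCombination (hX2.eval i) (hZ2.eval i) (hX2.eval j) (hZ2.eval j) (hXZ i j)
      ((covariance_comm _ _).trans (hXZ j i)),
    covariance_eval_of_hasLaw_pi_gaussianReal hX, covariance_eval_of_hasLaw_pi_gaussianReal hZ]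
  split_ifs <;> simp

end GaussianCoordinates

section GaussianChannel

/-- The Wiener gain `p√snr / (1 + p·snr)`: the coefficient of the linear estimator of an input of
power `p` per coordinate from `√snr · X + Z` that is optimal when the noise has unit power. -/
def wienerGain (p snr : ℝ) : ℝ := p * √snr / (1 + snr * p)

lemma wienerGain_residual {p snr : ℝ} (hp : 0 ≤ p) (hsnr : 0 ≤ snr) :
    1 - wienerGain p snr * √snr = 1 / (1 + snr * p) := by
  rw [wienerGain]
  field_simp
  rw [Real.sq_sqrt hsnr]
  ring

lemma wienerGain_error {p snr : ℝ} (hp : 0 ≤ p) (hsnr : 0 ≤ snr) :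
    (1 - wienerGain p snr * √snr) ^ 2 * p + wienerGain p snr ^ 2 = p / (1 + snr * p) := by
  have hden : 1 + snr * p ≠ 0 := by positivity
  rw [wienerGain_residual hp hsnr, wienerGain]
  field_simp
  rw [Real.sq_sqrt hsnr]
  ring

lemma wienerGain_orthogonality {p snr : ℝ} (hp : 0 ≤ p) (hsnr : 0 ≤ snr) :
    (1 - wienerGain p snr * √snr) * √snr * p = wienerGain p snr := by
  rw [wienerGain_residual hp hsnr, wienerGain]
  ring

lemma sub_mul_obs_apply {Ω : Type*} {n : ℕ} (X Z : Ω → Fin n → ℝ) (snr c : ℝ) (ω : Ω) (i : Fin n) :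
    X ω i - c * obs X Z snr ω i = (1 - c * √snr) * X ω i + -c * Z ω i := by
  rw [obs]
  ring

variable {Ω : Type*} [MeasurableSpace Ω] {μ : Measure Ω} {n : ℕ} {X Z : Ω → Fin n → ℝ} {snr : ℝ}

lemma obsSigma_le (hX : Measurable X) (hZ : Measurable Z) :
    obsSigma X Z snr ≤ ‹MeasurableSpace Ω› := by
  have hobs : Measurable (obs X Z snr) := by
    unfold obs
    fun_prop
  exact hobs.comap_le

lemma measurable_obsSigma_obs : Measurable[obsSigma X Z snr] (obs X Z snr) :=
  comap_measurable _

lemma memLp_two_obs (hX : MemLp X 2 μ) (hZ : MemLp Z 2 μ) : MemLp (obs X Z snr) 2 μ :=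
  (hX.const_smul √snr).add hZ

lemma integral_sum_sq_sub_mul_obs (hX : MemLp X 2 μ) (hZ : MemLp Z 2 μ)
    (hXZ : ∫ ω, X ω ⬝ᵥ Z ω ∂μ = 0) (c : ℝ) :
    ∫ ω, ∑ i, (X ω i - c * obs X Z snr ω i) ^ 2 ∂μ =
      (1 - c * √snr) ^ 2 * ∫ ω, ∑ i, X ω i ^ 2 ∂μ + c ^ 2 * ∫ ω, ∑ i, Z ω i ^ 2 ∂μ := by
  have hX2 : Integrable (fun ω => ∑ i, X ω i ^ 2) μ :=
    integrable_finsetSum _ fun i _ => (hX.eval i).integrable_sq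
  have hZ2 : Integrable (fun ω => ∑ i, Z ω i ^ 2) μ :=
    integrable_finsetSum _ fun i _ => (hZ.eval i).integrable_sq
  have hdot : Integrable (fun ω => X ω ⬝ᵥ Z ω) μ :=
    integrable_finsetSum _ fun i _ => (hX.eval i).integrable_mul (hZ.eval i)
  have hexpand (ω : Ω) : ∑ i, (X ω i - c * obs X Z snr ω i) ^ 2 =
      (1 - c * √snr) ^ 2 * ∑ i, X ω i ^ 2 + c ^ 2 * ∑ i, Z ω i ^ 2
        - 2 * (1 - c * √snr) * c * (X ω ⬝ᵥ Z ω) := by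
    simp only [sub_mul_obs_apply, dotProduct, Finset.mul_sum, ← Finset.sum_add_distrib,
      ← Finset.sum_sub_distrib]
    congr with i
    ring
  simp only [hexpand]
  rw [integral_sub (by fun_prop) (by fun_prop), integral_add (by fun_prop) (by fun_prop)]
  simp only [integral_const_mul, hXZ, mul_zero, sub_zero]

lemma trace_expMat_covMat_obsSigma_le [IsFiniteMeasure μ] (hX : Measurable X) (hZ : Measurable Z)
    (hX2 : MemLp X 2 μ) (hZ2 : MemLp Z 2 μ) (hXZ : ∫ ω, X ω ⬝ᵥ Z ω ∂μ = 0) {p : ℝ} (hp : 0 ≤ p)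
    (hXpow : ∫ ω, ∑ i, X ω i ^ 2 ∂μ ≤ n * p) (hZpow : ∫ ω, ∑ i, Z ω i ^ 2 ∂μ ≤ n)
    (hsnr : 0 ≤ snr) :
    (expMat μ (covMat (obsSigma X Z snr) μ X)).trace ≤ n * (p / (1 + snr * p)) := by
  set c := wienerGain p snr
  calc (expMat μ (covMat (obsSigma X Z snr) μ X)).trace
      ≤ ∫ ω, ∑ i, (X ω i - c * obs X Z snr ω i) ^ 2 ∂μ :=
        trace_expMat_covMat_le (obsSigma_le hX hZ) hX2 ((memLp_two_obs hX2 hZ2).const_smul c)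
          (measurable_obsSigma_obs.const_smul c)
    _ = (1 - c * √snr) ^ 2 * ∫ ω, ∑ i, X ω i ^ 2 ∂μ + c ^ 2 * ∫ ω, ∑ i, Z ω i ^ 2 ∂μ :=
        integral_sum_sq_sub_mul_obs hX2 hZ2 hXZ c
    _ ≤ (1 - c * √snr) ^ 2 * (n * p) + c ^ 2 * n := by gcongr
    _ = n * ((1 - c * √snr) ^ 2 * p + c ^ 2) := by ring
    _ = n * (p / (1 + snr * p)) := by rw [wienerGain_error hp hsnr]

variable {p : ℝ≥0}

lemma indepFun_sub_wienerGain_mul_obs (hX : HasLaw X (Measure.pi fun _ => gaussianReal 0 p) μ)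
    (hZ : HasLaw Z (Measure.pi fun _ => gaussianReal 0 1) μ) (hindep : IndepFun X Z μ)
    (hsnr : 0 ≤ snr) :
    IndepFun (fun ω i => X ω i - wienerGain p snr * obs X Z snr ω i) (obs X Z snr) μ := by
  have hXgauss := hasGaussianLaw_of_hasLaw_pi hX
  have hZgauss := hasGaussianLaw_of_hasLaw_pi hZ
  have := hXgauss.isProbabilityMeasure
  have hjoint : HasGaussianLaw (fun ω =>
      (fun i => X ω i - wienerGain p snr * obs X Z snr ω i, fun i => obs X Z snr ω i)) μ := by
    let input := ContinuousLinearMap.fst ℝ (Fin n → ℝ) (Fin n → ℝ)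
    let output := √snr • input + ContinuousLinearMap.snd ℝ (Fin n → ℝ) (Fin n → ℝ)
    exact (hindep.hasGaussianLaw hXgauss hZgauss).map
      ((input - wienerGain p snr • output).prod output)
  refine hjoint.indepFun_of_covariance_eval
    (X := fun i ω => X ω i - wienerGain p snr * obs X Z snr ω i)
    (Y := fun j ω => obs X Z snr ω j) fun i j => ?_
  have hcov := covariance_linearCombination_eval_of_gaussian hX hZ hindep
    (1 - wienerGain p snr * √snr) (-wienerGain p snr) √snr 1 i j
  rw [wienerGain_orthogonality p.coe_nonneg hsnr] at hcov
  simp only [sub_mul_obs_apply]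
  simpa [obs] using hcov

lemma condExp_obsSigma_ae_eq_wienerGain_mul_obs (hXm : Measurable X) (hZm : Measurable Z)
    (hX : HasLaw X (Measure.pi fun _ => gaussianReal 0 p) μ)
    (hZ : HasLaw Z (Measure.pi fun _ => gaussianReal 0 1) μ) (hindep : IndepFun X Z μ)
    (hsnr : 0 ≤ snr) (i : Fin n) :
    μ[fun ω => X ω i | obsSigma X Z snr] =ᵐ[μ] fun ω => wienerGain p snr * obs X Z snr ω i := by
  have hXint : Integrable X μ := (hasGaussianLaw_of_hasLaw_pi hX).integrable
  have hobsint : Integrable (obs X Z snr) μ :=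
    (hXint.smul √snr).add (hasGaussianLaw_of_hasLaw_pi hZ).integrable
  have := hX.isProbabilityMeasure
  have hobsm : Measurable[obsSigma X Z snr] fun ω => wienerGain p snr * obs X Z snr ω i :=
    ((measurable_pi_apply i).comp measurable_obsSigma_obs).const_mul _
  have hindep_residual :
      IndepFun (fun ω => X ω i - wienerGain p snr * obs X Z snr ω i) (obs X Z snr) μ :=
    (indepFun_sub_wienerGain_mul_obs hX hZ hindep hsnr).comp (measurable_pi_apply i) measurable_id
  refine condExp_ae_eq_of_indep_sub (obsSigma_le hXm hZm) (by fun_prop) (hXint.eval i)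
    ((hobsint.eval i).const_mul _) hobsm.stronglyMeasurable hindep_residual ?_
  simp only [Pi.sub_apply, sub_mul_obs_apply]
  exact integral_linearCombination_eval_of_gaussian hX hZ _ _ i

lemma expMat_covMat_obsSigma_of_gaussian (hXm : Measurable X) (hZm : Measurable Z)
    (hX : HasLaw X (Measure.pi fun _ => gaussianReal 0 p) μ)
    (hZ : HasLaw Z (Measure.pi fun _ => gaussianReal 0 1) μ) (hindep : IndepFun X Z μ)
    (hsnr : 0 ≤ snr) :
    expMat μ (covMat (obsSigma X Z snr) μ X) =
      ((p : ℝ) / (1 + snr * p)) • (1 : Matrix (Fin n) (Fin n) ℝ) := by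
  have hX2 := (hasGaussianLaw_of_hasLaw_pi hX).memLp_two
  have := hX.isProbabilityMeasure
  set a := 1 - wienerGain p snr * √snr with ha
  set b := -wienerGain p snr with hb
  ext i j
  calc expMat μ (covMat (obsSigma X Z snr) μ X) i j
      = ∫ ω, (a * X ω i + b * Z ω i) * (a * X ω j + b * Z ω j) ∂μ := by
        rw [expMat_covMat_apply (obsSigma_le hXm hZm) hX2]
        refine integral_congr_ae ?_
        filter_upwards [condExp_obsSigma_ae_eq_wienerGain_mul_obs hXm hZm hX hZ hindep hsnr i,
          condExp_obsSigma_ae_eq_wienerGain_mul_obs hXm hZm hX hZ hindep hsnr j] with ω hi hj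
        simp only [ceVec, hi, hj, sub_mul_obs_apply, ha, hb]
    _ = cov[fun ω => a * X ω i + b * Z ω i, fun ω => a * X ω j + b * Z ω j; μ] := by
        simp only [covariance, integral_linearCombination_eval_of_gaussian hX hZ, sub_zero]
    _ = if i = j then (p : ℝ) / (1 + snr * p) else 0 := by
        rw [covariance_linearCombination_eval_of_gaussian hX hZ hindep,
          ← wienerGain_error p.coe_nonneg hsnr, NNReal.coe_one, mul_one, ← sq, ← sq, neg_sq]
    _ = (((p : ℝ) / (1 + snr * p)) • (1 : Matrix (Fin n) (Fin n) ℝ)) i j := by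
        rw [Matrix.smul_apply, one_apply, smul_eq_mul, mul_ite, mul_one, mul_zero]

end GaussianChannel

theorem fisher_information_squared_lower_bound_general {Ω : Type*} [MeasurableSpace Ω]
    (μ : Measure Ω) [IsFiniteMeasure μ] (n : ℕ) (X Z : Ω → Fin n → ℝ)
    (hX : Measurable X) (hZ : Measurable Z) (hX2 : MemLp X 2 μ) (hZ2 : MemLp Z 2 μ)
    (hXZ : ∫ ω, X ω ⬝ᵥ Z ω ∂μ = 0) (hZpow : ∫ ω, ∑ i, Z ω i ^ 2 ∂μ ≤ n)
    (p : ℝ≥0) (hXpow : ∫ ω, ∑ i, X ω i ^ 2 ∂μ ≤ n * p) (snr : ℝ) (hsnr : 0 ≤ snr) :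
    (n : ℝ) / (1 + snr * p) ^ 2 ≤
      Matrix.trace (((1 : Matrix (Fin n) (Fin n) ℝ)
        - snr • expMat μ (covMat (obsSigma X Z snr) μ X)) ^ 2) ∧
    (HasLaw X (Measure.pi fun _ => gaussianReal 0 p) μ →
      HasLaw Z (Measure.pi fun _ => gaussianReal 0 1) μ → IndepFun X Z μ →
      Matrix.trace (((1 : Matrix (Fin n) (Fin n) ℝ)
        - snr • expMat μ (covMat (obsSigma X Z snr) μ X)) ^ 2) =
          (n : ℝ) / (1 + snr * p) ^ 2) := by
  have hcompl : 1 - snr * (p / (1 + snr * p)) = 1 / (1 + snr * p) := by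
    field_simp
    ring
  have hmean : Fintype.card (Fin n) * (1 / (1 + snr * p)) ≤
      (1 - snr • expMat μ (covMat (obsSigma X Z snr) μ X)).trace := by
    rw [trace_sub, trace_smul, trace_one, Fintype.card_fin, smul_eq_mul, ← hcompl]
    linarith [mul_le_mul_of_nonneg_left (trace_expMat_covMat_obsSigma_le hX hZ hX2 hZ2 hXZ
      p.coe_nonneg hXpow hZpow hsnr) hsnr]
  refine ⟨?_, fun hXlaw hZlaw hindep => ?_⟩
  · have hsymm : (1 - snr • expMat μ (covMat (obsSigma X Z snr) μ X)).IsSymm :=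
      isSymm_one.sub ((isSymm_expMat_covMat (obsSigma_le hX hZ) hX2).smul snr)
    simpa [div_eq_mul_inv] using
      card_mul_sq_le_trace_sq_of_card_mul_le_trace hsymm (by positivity) hmean
  · have hscalar : (1 : Matrix (Fin n) (Fin n) ℝ) -
        snr • expMat μ (covMat (obsSigma X Z snr) μ X) = (1 / (1 + snr * p)) • 1 := by
      rw [expMat_covMat_obsSigma_of_gaussian hX hZ hXlaw hZlaw hindep hsnr, ← hcompl]
      module
    simp [hscalar, smul_pow, div_eq_inv_mul]

/-- **Proposition 10 (lower bound on the squared Fisher information of the output).**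
If `(1/n)·E[‖X‖²] ≤ 1` then `Tr((I − snr·E[Cov(X|Y)])²) ≥ n/(1+snr)²`, with equality
when `X ~ N(0, Iₙ)`. -/
theorem fisher_information_squared_lower_bound {Ω : Type*} [MeasurableSpace Ω] (μ : Measure Ω) [IsProbabilityMeasure μ]
    (n : ℕ) (hn : 1 ≤ n) (X Z : Ω → Fin n → ℝ)
    (hX : Measurable X) (hZ : Measurable Z)
    (hZlaw : Measure.map Z μ = Measure.pi fun _ : Fin n => gaussianReal 0 1)
    (hindep : IndepFun X Z μ)
    (hX2 : Integrable (fun ω => ∑ i, (X ω i) ^ 2) μ)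
    (hpow : (1 / (n : ℝ)) * ∫ ω, ∑ i, (X ω i) ^ 2 ∂μ ≤ 1)
    (snr : ℝ) (hsnr : 0 < snr) :
    (n : ℝ) / (1 + snr) ^ 2 ≤
      Matrix.trace (((1 : Matrix (Fin n) (Fin n) ℝ)
        - snr • expMat μ (covMat (obsSigma X Z snr) μ X)) ^ 2) ∧
    ((Measure.map X μ = Measure.pi fun _ : Fin n => gaussianReal 0 1) →
      Matrix.trace (((1 : Matrix (Fin n) (Fin n) ℝ)
        - snr • expMat μ (covMat (obsSigma X Z snr) μ X)) ^ 2) = (n : ℝ) / (1 + snr) ^ 2) := by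
  have hZ' : HasLaw Z (Measure.pi fun _ => gaussianReal 0 1) μ := ⟨hZ.aemeasurable, hZlaw⟩
  have hX2' : MemLp X 2 μ := memLp_two_of_integrable_sum_sq hX.aestronglyMeasurable hX2
  have hZ2 : MemLp Z 2 μ := (hasGaussianLaw_of_hasLaw_pi hZ').memLp_two
  have hXpow : ∫ ω, ∑ i, X ω i ^ 2 ∂μ ≤ n * (1 : ℝ≥0) := by
    rwa [one_div, inv_mul_le_iff₀ (by exact_mod_cast hn)] at hpow
  have hZpow : ∫ ω, ∑ i, Z ω i ^ 2 ∂μ ≤ n := by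
    simpa using (integral_sum_sq_of_hasLaw_pi_gaussianReal hZ').le
  have hXZ : ∫ ω, X ω ⬝ᵥ Z ω ∂μ = 0 := integral_dotProduct_eq_zero_of_indepFun hX2' hZ2 hindep
    (integral_eval_of_hasLaw_pi_gaussianReal hZ')
  obtain ⟨hle, heq⟩ := fisher_information_squared_lower_bound_general μ n X Z hX hZ hX2' hZ2 hXZ
    hZpow 1 hXpow snr hsnr.le
  rw [NNReal.coe_one, mul_one] at hle heq
  exact ⟨hle, fun hXlaw => heq ⟨hX.aemeasurable, hXlaw⟩ hZ' hindep⟩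

end
end
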